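/- Let G be a finite group and C ⊆ G a conjugation-invariant subset with 1 ∈ C. For χ ∈ Irr(G), the singleton {χ} is a C-block of G if and only if χ = χ^C, i.e. χ vanishes on all elements of G outside C. -/

import Mathlib

/-!
If `{χ}` is a `C`-block, then `⟨χ, ψ⟩_C = ⟨χ, χ⟩_C ⟨χ, ψ⟩_G` for all irreducible `ψ`, by the first
orthogonality relation, hence for every character `ψ`, by Maschke's theorem. The regular character
`ψ` is supported at `1 ∈ C`, so there both scalar products equal `χ 1 ≠ 0`, and `⟨χ, χ⟩_C = 1`.
Comparing with `⟨χ, χ⟩_G = 1`, the sum of `|χ g|²` over `g ∉ C` vanishes, and so does each term.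

Conversely, if `χ = χ^C`, then `⟨χ, ψ⟩_C = ⟨χ, ψ⟩_G`, which is zero for irreducible `ψ ≠ χ`.
-/

open scoped Classical

noncomputable section

/-- The set of irreducible complex characters of the group `G`. -/
def IrrChar (G : Type) [Group G] : Set (G → ℂ) :=
  {χ | ∃ V : FDRep ℂ G, CategoryTheory.Simple V ∧ χ = FDRep.character V}

/-- Truncation of a class function to the subset `C`: `φ^C`. -/
def truncCF {G : Type} (C : Set G) (φ : G → ℂ) : G → ℂ := fun g =>
  if g ∈ C then φ g else 0

/-- The scalar product of class functions across the subset `C`: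
`⟨α,β⟩_C = (1/|G|) · Σ_{g ∈ C} α(g) · conj(β(g))`. -/
def innerOn {G : Type} [Fintype G] (C : Set G) (α β : G → ℂ) : ℂ :=
  (Fintype.card G : ℂ)⁻¹ * ∑ g : G, if g ∈ C then α g * (starRingEnd ℂ) (β g) else 0

/-- `B` is a `C`-basic set of `b`: `B ⊆ b` and the truncations `χ^C` for `χ ∈ B` form a
`ℤ`-basis of the `ℤ`-submodule of class functions generated by the `χ^C`, `χ ∈ b`. -/
def IsBasicSetOf {G : Type} [Group G] (C : Set G) (b B : Set (G → ℂ)) : Prop :=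
  B ⊆ b ∧
  LinearIndependent ℤ (fun χ : B => truncCF C (χ : G → ℂ)) ∧
  Submodule.span ℤ (truncCF C '' B) = Submodule.span ℤ (truncCF C '' b)

/-- The set of `p`-regular elements of `G` (elements of order coprime to `p`). -/
def pRegular (p : ℕ) (G : Type) [Group G] : Set G :=
  {g | Nat.Coprime (orderOf g) p}

/-- `b` is a `C`-block of `G`: a nonempty subset of `Irr G` which is orthogonal across `C`
to its complement in `Irr G`, and which is minimal (w.r.t. inclusion) among nonempty
subsets of `Irr G` with this property. -/
def IsCBlock {G : Type} [Group G] [Fintype G] (C : Set G) (b : Set (G → ℂ)) : Prop :=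
  b.Nonempty ∧ b ⊆ IrrChar G ∧
  (∀ χ ∈ b, ∀ ψ ∈ IrrChar G \ b, innerOn C χ ψ = 0) ∧
  ∀ b' ⊆ b, b'.Nonempty →
    (∀ χ ∈ b', ∀ ψ ∈ IrrChar G \ b', innerOn C χ ψ = 0) → b' = b

lemma eq_truncCF_iff {G : Type} {C : Set G} {φ : G → ℂ} :
    φ = truncCF C φ ↔ ∀ g ∉ C, φ g = 0 := by
  simp only [funext_iff, truncCF, eq_ite_iff, and_true]
  grind

section InnerProduct

variable {G : Type} [Fintype G] (C : Set G) (α β : G → ℂ)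

lemma innerOn_univ_truncCF_left : innerOn Set.univ (truncCF C α) β = innerOn C α β := by
  simp only [innerOn, truncCF, Set.mem_univ, if_true, ite_mul, zero_mul]

lemma innerOn_add_innerOn_compl : innerOn C α β + innerOn Cᶜ α β = innerOn Set.univ α β := by
  simp only [innerOn, ← mul_add, ← Finset.sum_add_distrib, Set.mem_compl_iff, Set.mem_univ, if_true]
  congr! 2 with g
  split_ifs <;> simp

lemma innerOn_zero_right : innerOn C α 0 = 0 := by
  simp [innerOn]

lemma innerOn_add_right (γ : G → ℂ) :
    innerOn C α (β + γ) = innerOn C α β + innerOn C α γ := by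
  simp only [innerOn, ← mul_add, ← Finset.sum_add_distrib, ← ite_add_zero, Pi.add_apply, map_add]

open scoped ComplexOrder in
lemma innerOn_self_eq_zero_iff {C : Set G} {φ : G → ℂ} :
    innerOn C φ φ = 0 ↔ ∀ g ∈ C, φ g = 0 := by
  rcases isEmpty_or_nonempty G with _ | _
  · simp [innerOn]
  have h_nonneg (g : G) : 0 ≤ if g ∈ C then φ g * starRingEnd ℂ (φ g) else 0 := by
    split_ifs
    exacts [mul_star_self_nonneg (φ g), le_rfl]
  rw [innerOn, mul_eq_zero_iff_left (inv_ne_zero (NeZero.ne _)),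
    Fintype.sum_eq_zero_iff_of_nonneg h_nonneg]
  simp [funext_iff]

end InnerProduct

section TraceInverse

variable {𝕜 G n : Type*} [RCLike 𝕜] [Group G] [Finite G] [Fintype n] [DecidableEq n]

open scoped ComplexOrder Matrix

lemma exists_posDef_conjTranspose_mul_mul_eq (M : G →* Matrix n n 𝕜) :
    ∃ P : Matrix n n 𝕜, P.PosDef ∧ ∀ g, (M g)ᴴ * P * M g = P := by
  have := Fintype.ofFinite G
  -- the standard Hermitian form, averaged over the group
  refine ⟨∑ h, (M h)ᴴ * M h, ?_, fun g => ?_⟩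
  · refine Matrix.posDef_sum Finset.univ_nonempty fun h _ => ?_
    refine Matrix.PosDef.conjTranspose_mul_self _ ?_
    exact Matrix.mulVec_injective_of_isUnit ((Group.isUnit h).map M)
  · simp only [Finset.mul_sum, Finset.sum_mul]
    refine Fintype.sum_equiv (Equiv.mulRight g) _ _ fun h => ?_
    simp only [Equiv.coe_mulRight, map_mul, Matrix.conjTranspose_mul, mul_assoc]

lemma trace_map_inv_eq_star (M : G →* Matrix n n 𝕜) (g : G) :
    (M g⁻¹).trace = star (M g).trace := by
  obtain ⟨P, hP, hinv⟩ := exists_posDef_conjTranspose_mul_mul_eq M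
  have h_adjoint : (M g)ᴴ * P = P * M g⁻¹ := by
    calc (M g)ᴴ * P = (M g)ᴴ * P * M g * M g⁻¹ := by
          rw [mul_assoc _ (M g), ← map_mul, mul_inv_cancel, map_one, mul_one]
      _ = P * M g⁻¹ := by rw [hinv]
  have h_det := (Matrix.isUnit_iff_isUnit_det P).1 hP.isUnit
  calc (M g⁻¹).trace = (P⁻¹ * (P * M g⁻¹)).trace := by
        rw [Matrix.nonsing_inv_mul_cancel_left _ _ h_det]
    _ = ((M g)ᴴ).trace := by
        rw [← h_adjoint, Matrix.trace_mul_comm, Matrix.mul_nonsing_inv_cancel_right _ _ h_det]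
    _ = star (M g).trace := Matrix.trace_conjTranspose _

lemma character_inv_eq_star {V : Type*} [AddCommGroup V] [Module 𝕜 V] [FiniteDimensional 𝕜 V]
    (ρ : Representation 𝕜 G V) (g : G) : ρ.character g⁻¹ = star (ρ.character g) := by
  let b := Module.finBasis 𝕜 V
  have h_trace (h : G) : ρ.character h = (LinearMap.toMatrixAlgEquiv b (ρ h)).trace :=
    LinearMap.trace_eq_matrix_trace 𝕜 b (ρ h)
  rw [h_trace, h_trace]
  exact trace_map_inv_eq_star ((LinearMap.toMatrixAlgEquiv b).toMonoidHom.comp ρ) g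

end TraceInverse

section RegularCharacter

variable {k G : Type*} [Field k]

lemma character_ofMulAction [Monoid G] {X : Type*} [Finite X] [MulAction G X] (g : G) :
    (Representation.ofMulAction k G X).character g = (MulAction.fixedBy X g).ncard := by
  have := Fintype.ofFinite X
  rw [Representation.character, LinearMap.trace_eq_matrix_trace k (MonoidAlgebra.basis X k)]
  simp [Matrix.trace, LinearMap.toMatrix_apply, MonoidAlgebra.basis, Finsupp.single_apply,
    MulAction.fixedBy, Set.ncard_eq_toFinset_card']

lemma character_leftRegular [Group G] [Fintype G] (g : G) :
    (Representation.leftRegular k G).character g = if g = 1 then (Fintype.card G : k) else 0 := by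
  rw [character_ofMulAction]
  split_ifs with h
  · simp [h, MulAction.fixedBy, Set.ncard_univ]
  · simp [h, MulAction.fixedBy]

end RegularCharacter

section Decomposition

universe u

variable {k G : Type*} [Field k] {V : Type u} [AddCommGroup V] [Module k V] [FiniteDimensional k V]

lemma trace_eq_trace_restrict_add_trace_restrict {p q : Submodule k V} (hpq : IsCompl p q)
    {f : Module.End k V} (hp : Set.MapsTo f p p) (hq : Set.MapsTo f q q) :
    LinearMap.trace k V f =
      LinearMap.trace k p (f.restrict hp) + LinearMap.trace k q (f.restrict hq) := by
  have h_internal : DirectSum.IsInternal fun b : Bool => cond b p q :=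
    (DirectSum.isInternal_submodule_iff_isCompl _ (i := true) (j := false) (by decide)
      (by ext b; cases b <;> simp)).2 hpq
  have : ∀ b : Bool, Module.Finite k ↥(cond b p q) := by rintro (_ | _) <;> infer_instance
  rw [LinearMap.trace_eq_sum_trace_restrict h_internal (by rintro (_ | _) <;> assumption),
    Fintype.sum_bool]
  rfl

lemma character_eq_add_of_isCompl [Monoid G] {ρ : Representation k G V}
    {σ τ : Subrepresentation ρ} (h : IsCompl σ τ) :
    ρ.character = σ.toRepresentation.character + τ.toRepresentation.character := by
  have h_compl : IsCompl σ.toSubmodule τ.toSubmodule :=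
    .of_eq (congrArg Subrepresentation.toSubmodule h.inf_eq_bot)
      (congrArg Subrepresentation.toSubmodule h.sup_eq_top)
  funext g
  exact trace_eq_trace_restrict_add_trace_restrict h_compl (σ.apply_mem_toSubmodule g)
    (τ.apply_mem_toSubmodule g)

lemma finrank_toSubmodule_lt [Monoid G] {ρ : Representation k G V} {σ : Subrepresentation ρ}
    (hσ : σ ≠ ⊤) : Module.finrank k σ.toSubmodule < Module.finrank k V :=
  Submodule.finrank_lt fun h => hσ (Subrepresentation.toSubmodule_injective h)

theorem character_mem_of_forall_isIrreducible [Group G] [Finite G] [NeZero (Nat.card G : k)]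
    {A : AddSubmonoid (G → k)}
    (hA : ∀ (W : Type u) [AddCommGroup W] [Module k W] [FiniteDimensional k W]
      (σ : Representation k G W), σ.IsIrreducible → σ.character ∈ A)
    (ρ : Representation k G V) : ρ.character ∈ A := by
  induction hn : Module.finrank k V using Nat.strong_induction_on generalizing V with
  | _ n ih =>
    subst hn
    rcases subsingleton_or_nontrivial V with _ | _
    · have : ρ.character = 0 := by
        funext g
        rw [Representation.character, Subsingleton.elim (ρ g) 0, map_zero, Pi.zero_apply]
      exact this ▸ A.zero_mem
    by_cases hρ : ρ.IsIrreducible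
    · exact hA V ρ hρ
    have : Nontrivial (Subrepresentation ρ) :=
      ⟨⊥, ⊤, fun h => bot_ne_top (congrArg Subrepresentation.toSubmodule h)⟩
    obtain ⟨σ, hσ_bot, hσ_top⟩ : ∃ σ : Subrepresentation ρ, σ ≠ ⊥ ∧ σ ≠ ⊤ := by
      by_contra! h
      exact hρ ⟨fun σ => or_iff_not_imp_left.2 (h σ)⟩
    obtain ⟨τ, hστ⟩ := exists_isCompl σ
    have hτ_top : τ ≠ ⊤ := fun h => hσ_bot (by simpa [h] using hστ.inf_eq_bot)
    rw [character_eq_add_of_isCompl hστ]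
    exact A.add_mem (ih _ (finrank_toSubmodule_lt hσ_top) _ rfl)
      (ih _ (finrank_toSubmodule_lt hτ_top) _ rfl)

end Decomposition

section Irreducible

variable {G : Type} [Group G]

lemma apply_one_ne_zero_of_mem_irrChar {χ : G → ℂ} (hχ : χ ∈ IrrChar G) : χ 1 ≠ 0 := by
  obtain ⟨V, _, rfl⟩ := hχ
  rw [FDRep.char_one, Nat.cast_ne_zero]
  intro h_finrank
  have : Subsingleton V := Module.finrank_zero_iff.1 h_finrank
  refine CategoryTheory.id_nonzero V ?_
  ext v
  exact Subsingleton.elim _ _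

lemma character_mem_irrChar [Finite G] {V : Type} [AddCommGroup V] [Module ℂ V]
    [FiniteDimensional ℂ V] {ρ : Representation ℂ G V} (hρ : ρ.IsIrreducible) :
    ρ.character ∈ IrrChar G := by
  have := Fintype.ofFinite G
  have : Invertible (Nat.card G : ℂ) := invertibleOfNonzero (NeZero.ne _)
  have h_norm := Representation.char_orthonormal ρ ρ
  rw [if_pos ⟨.refl ρ⟩, inv_mul_eq_one₀ (NeZero.ne _)] at h_norm
  exact ⟨FDRep.of ρ, (FDRep.simple_iff_char_is_norm_one _).2 h_norm.symm, rfl⟩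

lemma character_mem_closure_irrChar [Finite G] {V : Type} [AddCommGroup V] [Module ℂ V]
    [FiniteDimensional ℂ V] (ρ : Representation ℂ G V) :
    ρ.character ∈ AddSubmonoid.closure (IrrChar G) :=
  character_mem_of_forall_isIrreducible
    (fun _ _ _ _ _ hσ => AddSubmonoid.subset_closure (character_mem_irrChar hσ)) ρ

variable [Fintype G]

lemma innerOn_univ_character (V W : FDRep ℂ G) [CategoryTheory.Simple V]
    [CategoryTheory.Simple W] :
    innerOn Set.univ V.character W.character = if Nonempty (V ≅ W) then 1 else 0 := by
  have : Invertible (Nat.card G : ℂ) := invertibleOfNonzero (NeZero.ne _)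
  have h_inv (g : G) : W.character g⁻¹ = starRingEnd ℂ (W.character g) :=
    character_inv_eq_star W.ρ g
  simpa only [innerOn, Set.mem_univ, if_true, Nat.card_eq_fintype_card, h_inv]
    using FDRep.char_orthonormal V W

lemma innerOn_univ_self_of_mem_irrChar {χ : G → ℂ} (hχ : χ ∈ IrrChar G) :
    innerOn Set.univ χ χ = 1 := by
  obtain ⟨V, _, rfl⟩ := hχ
  rw [innerOn_univ_character, if_pos ⟨.refl V⟩]

lemma innerOn_univ_of_mem_irrChar_of_ne {χ ψ : G → ℂ} (hχ : χ ∈ IrrChar G)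
    (hψ : ψ ∈ IrrChar G) (h : χ ≠ ψ) : innerOn Set.univ χ ψ = 0 := by
  obtain ⟨V, _, rfl⟩ := hχ
  obtain ⟨W, _, rfl⟩ := hψ
  rw [innerOn_univ_character, if_neg fun ⟨e⟩ => h (FDRep.char_iso e)]

lemma isCBlock_singleton_iff_innerOn_eq_zero {C : Set G} {χ : G → ℂ} (hχ : χ ∈ IrrChar G) :
    IsCBlock C {χ} ↔ ∀ ψ ∈ IrrChar G, χ ≠ ψ → innerOn C χ ψ = 0 := by
  constructor
  · rintro ⟨-, -, h_orth, -⟩ ψ hψ h_ne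
    exact h_orth χ rfl ψ ⟨hψ, h_ne.symm⟩
  · refine fun h => ⟨Set.singleton_nonempty χ, Set.singleton_subset_iff.2 hχ, ?_, ?_⟩
    · rintro _ rfl ψ ⟨hψ, h_ne⟩
      exact h ψ hψ (Ne.symm h_ne)
    · exact fun b hb h_nonempty _ => h_nonempty.subset_singleton_iff.1 hb

lemma innerOn_character_of_isCBlock_singleton {C : Set G} {χ : G → ℂ} (h : IsCBlock C {χ})
    {V : Type} [AddCommGroup V] [Module ℂ V] [FiniteDimensional ℂ V] (ρ : Representation ℂ G V) :
    innerOn C χ ρ.character = innerOn C χ χ * innerOn Set.univ χ ρ.character := by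
  have hχ : χ ∈ IrrChar G := h.2.1 rfl
  have h_mem := character_mem_closure_irrChar ρ
  generalize ρ.character = φ at h_mem ⊢
  induction h_mem using AddSubmonoid.closure_induction with
  | mem ψ hψ =>
    rcases eq_or_ne χ ψ with rfl | h_ne
    · rw [innerOn_univ_self_of_mem_irrChar hχ, mul_one]
    · rw [(isCBlock_singleton_iff_innerOn_eq_zero hχ).1 h ψ hψ h_ne,
        innerOn_univ_of_mem_irrChar_of_ne hχ hψ h_ne, mul_zero]
  | zero => simp only [innerOn_zero_right, mul_zero]
  | add φ ψ _ _ hφ hψ => rw [innerOn_add_right, innerOn_add_right, hφ, hψ, mul_add]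

lemma innerOn_character_leftRegular {C : Set G} (h1 : (1 : G) ∈ C) (φ : G → ℂ) :
    innerOn C φ (Representation.leftRegular ℂ G).character = φ 1 := by
  rw [innerOn, Fintype.sum_eq_single 1 fun g hg => by simp [character_leftRegular, hg], if_pos h1,
    character_leftRegular, if_pos rfl, Complex.conj_natCast, mul_comm (φ 1),
    inv_mul_cancel_left₀ (NeZero.ne _)]

lemma innerOn_self_of_isCBlock_singleton {C : Set G} (h1 : (1 : G) ∈ C) {χ : G → ℂ}
    (h : IsCBlock C {χ}) : innerOn C χ χ = 1 := by
  have h_reg := innerOn_character_of_isCBlock_singleton h (Representation.leftRegular ℂ G)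
  rw [innerOn_character_leftRegular h1, innerOn_character_leftRegular (Set.mem_univ 1)] at h_reg
  exact (right_eq_mul₀ (apply_one_ne_zero_of_mem_irrChar (h.2.1 rfl))).1 h_reg

end Irreducible

theorem singleton_isCBlock_iff_general {G : Type} [Group G] [Fintype G]
    (C : Set G) (h1 : (1 : G) ∈ C) (χ : G → ℂ) (hχ : χ ∈ IrrChar G) :
    IsCBlock C {χ} ↔ χ = truncCF C χ := by
  constructor
  · intro h_block
    have h_sum := innerOn_add_innerOn_compl C χ χ
    rw [innerOn_self_of_isCBlock_singleton h1 h_block, innerOn_univ_self_of_mem_irrChar hχ,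
      add_eq_left] at h_sum
    exact eq_truncCF_iff.2 (innerOn_self_eq_zero_iff.1 h_sum)
  · intro h_trunc
    refine (isCBlock_singleton_iff_innerOn_eq_zero hχ).2 fun ψ hψ h_ne => ?_
    rw [← innerOn_univ_truncCF_left, ← h_trunc, innerOn_univ_of_mem_irrChar_of_ne hχ hψ h_ne]

/-- If `1 ∈ C`, then for `χ ∈ Irr G` the singleton `{χ}` is a `C`-block of `G` if and only
if `χ = χ^C`, i.e. `χ` vanishes outside `C`. -/
theorem singleton_isCBlock_iff {G : Type} [Group G] [Fintype G]
    (C : Set G) (hC : ∀ g x : G, x ∈ C → g * x * g⁻¹ ∈ C) (h1 : (1 : G) ∈ C)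
    (χ : G → ℂ) (hχ : χ ∈ IrrChar G) :
    IsCBlock C {χ} ↔ χ = truncCF C χ :=
  singleton_isCBlock_iff_general C h1 χ hχ
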